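/- arXiv:1306.0435 — 3 statements merged into one kernel-verified Lean document; each statement's English description precedes it below -/
import Mathlib

section
/- Let Q ∈ L²_unif(ℝ) and τ ∈ L¹_unif(ℝ) be real-valued, K := 2(‖Q‖_{L²_unif(ℝ)} + ‖τ‖_{L¹_unif(ℝ)}), and for u ∈ H¹(ℝ) define t[u] := ∫_ℝ |u'(x)|² dx − ∫_ℝ Q(x)( conj(u'(x)) u(x) + conj(u(x)) u'(x) ) dx + ∫_ℝ τ(x) |u(x)|² dx. Then for every u ∈ H¹(ℝ): t[u] ≥ m(K) ‖u‖²_{L²(ℝ)}, where m(K) = −4K if 0 ≤ K < 1/2 and m(K) = −32K⁴ if K ≥ 1/2. In particular the self-adjoint operator S(q) with real distributional potential q = Q' + τ is bounded below by m(K). -/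
open MeasureTheory

/-- The Stepanov `L²_unif` norm: `(sup_t ∫_t^{t+1} |Q|²)^{1/2}`. -/
noncomputable def stepL2 (Q : ℝ → ℂ) : ℝ :=
  Real.sqrt (⨆ t : ℝ, ∫ s in t..(t + 1), ‖Q s‖ ^ 2)

/-- The Stepanov `L¹_unif` norm: `sup_t ∫_t^{t+1} |τ|`. -/
noncomputable def stepL1 (τ : ℝ → ℂ) : ℝ :=
  ⨆ t : ℝ, ∫ s in t..(t + 1), ‖τ s‖

/-- Membership in the Stepanov space `L²_unif(ℝ)`: locally square integrable with
finite Stepanov norm. -/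
def InStepL2 (Q : ℝ → ℂ) : Prop :=
  AEStronglyMeasurable Q volume ∧
  LocallyIntegrable (fun s => ‖Q s‖ ^ 2) volume ∧
  BddAbove (Set.range fun t : ℝ => ∫ s in t..(t + 1), ‖Q s‖ ^ 2)

/-- Membership in the Stepanov space `L¹_unif(ℝ)`: locally integrable with
finite Stepanov norm. -/
def InStepL1 (τ : ℝ → ℂ) : Prop :=
  LocallyIntegrable τ volume ∧
  BddAbove (Set.range fun t : ℝ => ∫ s in t..(t + 1), ‖τ s‖)

/-- `u ∈ H¹(ℝ)` with derivative `u'`: `u` is absolutely continuous with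
`u x = u 0 + ∫_0^x u'`, and both `u` and `u'` are square integrable. -/
def InH1 (u u' : ℝ → ℂ) : Prop :=
  LocallyIntegrable u' volume ∧
  (∀ x : ℝ, u x = u 0 + ∫ s in (0:ℝ)..x, u' s) ∧
  MemLp u 2 volume ∧ MemLp u' 2 volume

/-- The constant `K = 2(‖Q‖_{L²_unif} + ‖τ‖_{L¹_unif})`. -/
noncomputable def Kc (Q τ : ℝ → ℂ) : ℝ := 2 * (stepL2 Q + stepL1 τ)

/-- The sesquilinear form `t[u] = ‖u'‖² - ∫ Q (conj(u')u + conj(u)u') + ∫ τ|u|²`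
associated with the Schrödinger operator with potential `q = Q' + τ`. -/
noncomputable def tform (Q τ u u' : ℝ → ℂ) : ℂ :=
  (Complex.ofReal (∫ x : ℝ, ‖u' x‖ ^ 2))
    - (∫ x : ℝ, Q x * ((starRingEnd ℂ) (u' x) * u x + (starRingEnd ℂ) (u x) * u' x))
    + ∫ x : ℝ, τ x * (‖u x‖ : ℂ) ^ 2

/-!
On an interval of length `l`, the bound `‖u x - u y‖² ≤ l ∫ ‖u'‖²`, averaged over `y`, gives
`‖u x‖² ≤ ∫ (2 / l ‖u‖² + 2 l ‖u'‖²)`. Summing over a tiling of `ℝ` by such intervals, every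
weight `W ≥ 0` of mass at most `M` on them satisfies
`∫ W ‖u‖² ≤ M ∫ (2 / l ‖u‖² + 2 l ‖u'‖²)`. Young's inequality with parameter `d` bounds the
perturbation `t[u] - ∫ ‖u'‖²` by `d ∫ ‖u'‖²` and such integrals for the weights `d⁻¹ |Q|²` and
`|τ|`, and `l`, `d` are chosen so that `∫ ‖u'‖²` absorbs everything but a multiple of `∫ ‖u‖²`.
-/

section Integrals

variable {α E : Type*} [MeasurableSpace α] {μ : Measure α} [NormedAddCommGroup E]
  [NormedSpace ℝ E]

theorem norm_integral_sq_le [IsFiniteMeasure μ] {f : α → E} (hf : MemLp f 2 μ) :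
    ‖∫ x, f x ∂μ‖ ^ 2 ≤ μ.real Set.univ * ∫ x, ‖f x‖ ^ 2 ∂μ := by
  rcases eq_zero_or_neZero μ with rfl | _
  · simp
  have jensen : (⨍ x, ‖f x‖ ∂μ) ^ 2 ≤ ⨍ x, ‖f x‖ ^ 2 ∂μ :=
    (even_two.convexOn_pow (𝕜 := ℝ)).map_average_le (continuous_pow 2).continuousOn isClosed_univ
      (by simp) (hf.integrable one_le_two).norm hf.norm.integrable_sq
  calc ‖∫ x, f x ∂μ‖ ^ 2
      ≤ (∫ x, ‖f x‖ ∂μ) ^ 2 := by gcongr; exact norm_integral_le_integral_norm f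
    _ = μ.real Set.univ ^ 2 * (⨍ x, ‖f x‖ ∂μ) ^ 2 := by
      rw [← measure_smul_average, smul_eq_mul, mul_pow]
    _ ≤ μ.real Set.univ ^ 2 * ⨍ x, ‖f x‖ ^ 2 ∂μ := by gcongr
    _ = μ.real Set.univ * ∫ x, ‖f x‖ ^ 2 ∂μ := by
      rw [← measure_smul_average μ fun x => ‖f x‖ ^ 2, smul_eq_mul, sq, mul_assoc]

theorem norm_intervalIntegral_sq_le {f : ℝ → E} {a b x y : ℝ}
    (hx : x ∈ Set.Icc a b) (hy : y ∈ Set.Icc a b)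
    (hf : MemLp f 2 (volume.restrict (Set.Ioc a b))) :
    ‖∫ t in y..x, f t‖ ^ 2 ≤ (b - a) * ∫ t in Set.Ioc a b, ‖f t‖ ^ 2 := by
  have hsub : Set.uIoc y x ⊆ Set.Ioc a b :=
    Set.Ioc_subset_Ioc (le_inf hy.1 hx.1) (sup_le hy.2 hx.2)
  calc ‖∫ t in y..x, f t‖ ^ 2
      = ‖∫ t in Set.uIoc y x, f t‖ ^ 2 := by rw [intervalIntegral.norm_intervalIntegral_eq]
    _ ≤ volume.real (Set.uIoc y x) * ∫ t in Set.uIoc y x, ‖f t‖ ^ 2 := by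
      have : IsFiniteMeasure (volume.restrict (Set.uIoc y x)) :=
        isFiniteMeasure_restrict.2 measure_Ioc_lt_top.ne
      simpa only [measureReal_restrict_apply_univ] using
        norm_integral_sq_le (hf.mono_measure (Measure.restrict_mono hsub le_rfl))
    _ ≤ (b - a) * ∫ t in Set.Ioc a b, ‖f t‖ ^ 2 := by
      have hvol : volume.real (Set.uIoc y x) ≤ b - a :=
        (measureReal_mono hsub measure_Ioc_lt_top.ne).trans_eq
          (Real.volume_real_Ioc_of_le (hx.1.trans hx.2))
      have hint : ∫ t in Set.uIoc y x, ‖f t‖ ^ 2 ≤ ∫ t in Set.Ioc a b, ‖f t‖ ^ 2 :=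
        setIntegral_mono_set (hf.integrable_norm_pow two_ne_zero)
          (ae_of_all _ fun t => sq_nonneg ‖f t‖) hsub.eventuallyLE
      gcongr
      exact sub_nonneg.2 (hx.1.trans hx.2)

theorem norm_sq_le_setIntegral_add {u u' : ℝ → E} {a b x : ℝ} (hab : a < b)
    (hx : x ∈ Set.Icc a b) (hu : MemLp u 2 (volume.restrict (Set.Ioc a b)))
    (hu' : MemLp u' 2 (volume.restrict (Set.Ioc a b)))
    (hderiv : ∀ y ∈ Set.Icc a b, u x - u y = ∫ t in y..x, u' t) :
    ‖u x‖ ^ 2 ≤ ∫ y in Set.Ioc a b, (2 / (b - a) * ‖u y‖ ^ 2 + 2 * (b - a) * ‖u' y‖ ^ 2) := by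
  have hba : 0 < b - a := sub_pos.2 hab
  have hpt : ∀ y ∈ Set.Ioc a b, ‖u x‖ ^ 2 ≤
      2 * ‖u y‖ ^ 2 + 2 * ((b - a) * ∫ t in Set.Ioc a b, ‖u' t‖ ^ 2) := fun y hy => by
    have hy := Set.Ioc_subset_Icc_self hy
    calc ‖u x‖ ^ 2
        = ‖u y + (u x - u y)‖ ^ 2 := by rw [add_sub_cancel]
      _ ≤ (‖u y‖ + ‖u x - u y‖) ^ 2 := by gcongr; exact norm_add_le _ _
      _ ≤ 2 * (‖u y‖ ^ 2 + ‖u x - u y‖ ^ 2) := add_sq_le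
      _ ≤ 2 * (‖u y‖ ^ 2 + (b - a) * ∫ t in Set.Ioc a b, ‖u' t‖ ^ 2) := by
        gcongr
        rw [hderiv y hy]
        exact norm_intervalIntegral_sq_le hx hy hu'
      _ = _ := mul_add _ _ _
  have iu := hu.integrable_norm_pow two_ne_zero
  have iu' := hu'.integrable_norm_pow two_ne_zero
  have havg : (b - a) * ‖u x‖ ^ 2 ≤ 2 * (∫ y in Set.Ioc a b, ‖u y‖ ^ 2) +
      (b - a) * (2 * ((b - a) * ∫ t in Set.Ioc a b, ‖u' t‖ ^ 2)) := by
    have h := setIntegral_mono_on (μ := volume) (f := fun _ => ‖u x‖ ^ 2)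
      (integrable_const _) ((iu.const_mul 2).fun_add (integrable_const _)) measurableSet_Ioc hpt
    rwa [integral_add (iu.const_mul 2) (integrable_const _), integral_const_mul,
      setIntegral_const, setIntegral_const, Real.volume_real_Ioc_of_le hab.le] at h
  rw [integral_add (iu.const_mul _) (iu'.const_mul _), integral_const_mul, integral_const_mul]
  refine le_of_mul_le_mul_left (havg.trans_eq ?_) hba
  field_simp

theorem norm_integral_mul_conj_add_le {𝕜 : Type*} [RCLike 𝕜] {q f g : α → 𝕜} {d : ℝ} (hd : 0 < d)
    (hg : Integrable (fun x => ‖g x‖ ^ 2) μ)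
    (hqf : Integrable (fun x => ‖q x‖ ^ 2 * ‖f x‖ ^ 2) μ) :
    ‖∫ x, q x * ((starRingEnd 𝕜) (g x) * f x + (starRingEnd 𝕜) (f x) * g x) ∂μ‖ ≤
      d * (∫ x, ‖g x‖ ^ 2 ∂μ) + d⁻¹ * ∫ x, ‖q x‖ ^ 2 * ‖f x‖ ^ 2 ∂μ := by
  rw [← integral_const_mul, ← integral_const_mul,
    ← integral_add (hg.const_mul d) (hqf.const_mul d⁻¹)]
  refine norm_integral_le_of_norm_le ((hg.const_mul d).add (hqf.const_mul d⁻¹))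
    (ae_of_all _ fun x => ?_)
  calc ‖q x * ((starRingEnd 𝕜) (g x) * f x + (starRingEnd 𝕜) (f x) * g x)‖
      ≤ ‖q x‖ * (‖g x‖ * ‖f x‖ + ‖f x‖ * ‖g x‖) := by
        rw [norm_mul]
        gcongr
        exact (norm_add_le _ _).trans_eq (by simp only [norm_mul, RCLike.norm_conj])
    _ = 2 * ‖g x‖ * (‖q x‖ * ‖f x‖) := by ring
    _ ≤ d * ‖g x‖ ^ 2 + d⁻¹ * (‖q x‖ * ‖f x‖) ^ 2 := two_mul_le_add_mul_sq hd
    _ = d * ‖g x‖ ^ 2 + d⁻¹ * (‖q x‖ ^ 2 * ‖f x‖ ^ 2) := by rw [mul_pow]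

end Integrals

section Tiling

open scoped ENNReal

variable {l : ℝ}

theorem lintegral_eq_tsum_setLIntegral_Ioc (hl : 0 < l) (μ : Measure ℝ) (f : ℝ → ℝ≥0∞) :
    ∫⁻ x, f x ∂μ = ∑' n : ℤ, ∫⁻ x in Set.Ioc (n • l) (n • l + l), f x ∂μ := by
  have hsucc (n : ℤ) : n • l + l = (n + 1) • l := by rw [add_smul, one_smul]
  simp_rw [hsucc]
  rw [← lintegral_iUnion (fun _ => measurableSet_Ioc) (Set.pairwise_disjoint_Ioc_zsmul l),
    iUnion_Ioc_zsmul hl, Measure.restrict_univ]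

theorem lintegral_le_mul_lintegral_of_forall_Ioc {μ ν : Measure ℝ} {φ g : ℝ → ℝ≥0∞} {M : ℝ≥0∞}
    (hl : 0 < l) (hν : ∀ t, ν (Set.Ioc t (t + l)) ≤ M)
    (hφ : ∀ t, ∀ x ∈ Set.Ioc t (t + l), φ x ≤ ∫⁻ y in Set.Ioc t (t + l), g y ∂μ) :
    ∫⁻ x, φ x ∂ν ≤ M * ∫⁻ y, g y ∂μ := by
  rw [lintegral_eq_tsum_setLIntegral_Ioc hl ν, lintegral_eq_tsum_setLIntegral_Ioc hl μ,
    ← ENNReal.tsum_mul_left]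
  refine ENNReal.tsum_le_tsum fun n => ?_
  calc ∫⁻ x in Set.Ioc (n • l) (n • l + l), φ x ∂ν
      ≤ ∫⁻ _ in Set.Ioc (n • l) (n • l + l),
          (∫⁻ y in Set.Ioc (n • l) (n • l + l), g y ∂μ) ∂ν :=
        setLIntegral_mono' measurableSet_Ioc (hφ (n • l))
    _ = (∫⁻ y in Set.Ioc (n • l) (n • l + l), g y ∂μ) * ν (Set.Ioc (n • l) (n • l + l)) :=
        setLIntegral_const _ _
    _ ≤ M * ∫⁻ y in Set.Ioc (n • l) (n • l + l), g y ∂μ := by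
        rw [mul_comm]
        gcongr
        exact hν _

theorem lintegral_ofReal_mul_le_of_forall_Ioc {W φ g : ℝ → ℝ} {M : ℝ}
    (hl : 0 < l) (hW : LocallyIntegrable W) (hW0 : 0 ≤ W)
    (hWM : ∀ t, ∫ x in Set.Ioc t (t + l), W x ≤ M)
    (hφ : AEStronglyMeasurable φ) (hg : Integrable g) (hg0 : 0 ≤ g)
    (hφg : ∀ t, ∀ x ∈ Set.Ioc t (t + l), φ x ≤ ∫ y in Set.Ioc t (t + l), g y) :
    ∫⁻ x, ENNReal.ofReal (W x * φ x) ≤ ENNReal.ofReal (M * ∫ y, g y) := by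
  have hmass (t : ℝ) : volume.withDensity (fun x => ENNReal.ofReal (W x)) (Set.Ioc t (t + l)) ≤
      ENNReal.ofReal M := by
    have hWi : IntegrableOn W (Set.Ioc t (t + l)) :=
      (hW.integrableOn_isCompact isCompact_Icc).mono_set Set.Ioc_subset_Icc_self
    rw [withDensity_apply _ measurableSet_Ioc,
      ← ofReal_integral_eq_lintegral_ofReal hWi (ae_of_all _ hW0)]
    exact ENNReal.ofReal_le_ofReal (hWM t)
  have hlocal : ∀ t, ∀ x ∈ Set.Ioc t (t + l),
      ENNReal.ofReal (φ x) ≤ ∫⁻ y in Set.Ioc t (t + l), ENNReal.ofReal (g y) := fun t x hx => by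
    rw [← ofReal_integral_eq_lintegral_ofReal hg.integrableOn (ae_of_all _ hg0)]
    exact ENNReal.ofReal_le_ofReal (hφg t x hx)
  have hglobal := lintegral_le_mul_lintegral_of_forall_Ioc hl hmass hlocal
  rw [lintegral_withDensity_eq_lintegral_mul₀ hW.aestronglyMeasurable.aemeasurable.ennreal_ofReal
      hφ.aemeasurable.ennreal_ofReal,
    ← ofReal_integral_eq_lintegral_ofReal hg (ae_of_all _ hg0),
    ← ENNReal.ofReal_mul ((integral_nonneg hW0).trans (hWM 0))] at hglobal
  simpa only [Pi.mul_apply, ← ENNReal.ofReal_mul (hW0 _)] using hglobal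

theorem integrable_mul_and_integral_mul_le_of_forall_Ioc {W φ g : ℝ → ℝ} {M : ℝ}
    (hl : 0 < l) (hW : LocallyIntegrable W) (hW0 : 0 ≤ W)
    (hWM : ∀ t, ∫ x in Set.Ioc t (t + l), W x ≤ M)
    (hφ : AEStronglyMeasurable φ) (hφ0 : 0 ≤ φ) (hg : Integrable g) (hg0 : 0 ≤ g)
    (hφg : ∀ t, ∀ x ∈ Set.Ioc t (t + l), φ x ≤ ∫ y in Set.Ioc t (t + l), g y) :
    Integrable (fun x => W x * φ x) ∧ ∫ x, W x * φ x ≤ M * ∫ y, g y := by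
  have hle := lintegral_ofReal_mul_le_of_forall_Ioc hl hW hW0 hWM hφ hg hg0 hφg
  have hnonneg : 0 ≤ fun x => W x * φ x := fun x => mul_nonneg (hW0 x) (hφ0 x)
  have hint : Integrable (fun x => W x * φ x) :=
    (lintegral_ofReal_ne_top_iff_integrable (hW.aestronglyMeasurable.mul hφ)
      (ae_of_all _ hnonneg)).1 (hle.trans_lt ENNReal.ofReal_lt_top).ne
  have hM0 : 0 ≤ M := (integral_nonneg hW0).trans (hWM 0)
  refine ⟨hint, ?_⟩
  rwa [← ofReal_integral_eq_lintegral_ofReal hint (ae_of_all _ hnonneg),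
    ENNReal.ofReal_le_ofReal_iff (mul_nonneg hM0 (integral_nonneg hg0))] at hle

end Tiling

theorem sq_stepL2 (Q : ℝ → ℂ) : stepL2 Q ^ 2 = ⨆ t : ℝ, ∫ s in t..(t + 1), ‖Q s‖ ^ 2 :=
  Real.sq_sqrt <| Real.iSup_nonneg fun _ =>
    intervalIntegral.integral_nonneg (le_add_of_nonneg_right zero_le_one) fun s _ =>
      sq_nonneg ‖Q s‖

theorem stepL2_nonneg (Q : ℝ → ℂ) : 0 ≤ stepL2 Q :=
  Real.sqrt_nonneg _

theorem stepL1_nonneg (τ : ℝ → ℂ) : 0 ≤ stepL1 τ :=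
  Real.iSup_nonneg fun _ =>
    intervalIntegral.integral_nonneg (le_add_of_nonneg_right zero_le_one) fun s _ =>
      norm_nonneg (τ s)

theorem InStepL2.integral_le {Q : ℝ → ℂ} (hQ : InStepL2 Q) (t : ℝ) :
    ∫ s in t..(t + 1), ‖Q s‖ ^ 2 ≤ stepL2 Q ^ 2 :=
  (le_ciSup hQ.2.2 t).trans_eq (sq_stepL2 Q).symm

theorem InStepL1.integral_le {τ : ℝ → ℂ} (hτ : InStepL1 τ) (t : ℝ) :
    ∫ s in t..(t + 1), ‖τ s‖ ≤ stepL1 τ :=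
  le_ciSup hτ.2 t

namespace InH1

variable {u u' : ℝ → ℂ}

theorem sub_eq_integral (hu : InH1 u u') (x y : ℝ) : u x - u y = ∫ t in y..x, u' t := by
  have hint (a b : ℝ) : IntervalIntegrable u' volume a b :=
    (hu.1.integrableOn_isCompact isCompact_uIcc).intervalIntegrable
  rw [hu.2.1 x, hu.2.1 y, add_sub_add_left_eq_sub,
    intervalIntegral.integral_interval_sub_left (hint _ _) (hint _ _)]

theorem integrable_norm_sq (hu : InH1 u u') : Integrable fun x => ‖u x‖ ^ 2 :=
  hu.2.2.1.integrable_norm_pow two_ne_zero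

theorem integrable_norm_deriv_sq (hu : InH1 u u') : Integrable fun x => ‖u' x‖ ^ 2 :=
  hu.2.2.2.integrable_norm_pow two_ne_zero

theorem integrable_mul_norm_sq_and_integral_le (hu : InH1 u u') {W : ℝ → ℝ} {M l : ℝ}
    (hW : LocallyIntegrable W) (hW0 : 0 ≤ W) (hWM : ∀ t : ℝ, ∫ x in t..(t + 1), W x ≤ M)
    (hl : 0 < l) (hl1 : l ≤ 1) :
    Integrable (fun x => W x * ‖u x‖ ^ 2) ∧
      ∫ x, W x * ‖u x‖ ^ 2 ≤
        M * (2 / l * (∫ x, ‖u x‖ ^ 2) + 2 * l * ∫ x, ‖u' x‖ ^ 2) := by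
  have hmass (t : ℝ) : ∫ x in Set.Ioc t (t + l), W x ≤ M := by
    have hWi : IntegrableOn W (Set.Ioc t (t + 1)) :=
      (hW.integrableOn_isCompact isCompact_Icc).mono_set Set.Ioc_subset_Icc_self
    calc ∫ x in Set.Ioc t (t + l), W x
        ≤ ∫ x in Set.Ioc t (t + 1), W x :=
          setIntegral_mono_set hWi (ae_of_all _ hW0)
            (Set.Ioc_subset_Ioc_right (by linarith)).eventuallyLE
      _ = ∫ x in t..(t + 1), W x := (intervalIntegral.integral_of_le (by linarith)).symm
      _ ≤ M := hWM t
  have hlocal : ∀ t, ∀ x ∈ Set.Ioc t (t + l),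
      ‖u x‖ ^ 2 ≤ ∫ y in Set.Ioc t (t + l), (2 / l * ‖u y‖ ^ 2 + 2 * l * ‖u' y‖ ^ 2) :=
    fun t x hx => by
      simpa only [add_sub_cancel_left] using
        norm_sq_le_setIntegral_add (lt_add_of_pos_right t hl) (Set.Ioc_subset_Icc_self hx)
          (hu.2.2.1.restrict _) (hu.2.2.2.restrict _) fun y _ => hu.sub_eq_integral x y
  have iu := hu.integrable_norm_sq.const_mul (2 / l)
  have iu' := hu.integrable_norm_deriv_sq.const_mul (2 * l)
  rw [← integral_const_mul, ← integral_const_mul, ← integral_add iu iu']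
  exact integrable_mul_and_integral_mul_le_of_forall_Ioc hl hW hW0 hmass
    hu.integrable_norm_sq.aestronglyMeasurable (fun x => sq_nonneg ‖u x‖) (iu.add iu')
    (fun x => by positivity) hlocal

theorem le_re_tform {Q τ : ℝ → ℂ} (hu : InH1 u u') (hQ : InStepL2 Q) (hτ : InStepL1 τ) {l d : ℝ}
    (hl : 0 < l) (hl1 : l ≤ 1) (hd : 0 < d) :
    (1 - d) * (∫ x, ‖u' x‖ ^ 2) - (d⁻¹ * stepL2 Q ^ 2 + stepL1 τ) *
      (2 / l * (∫ x, ‖u x‖ ^ 2) + 2 * l * ∫ x, ‖u' x‖ ^ 2) ≤ (tform Q τ u u').re := by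
  obtain ⟨iQ, hQu⟩ := hu.integrable_mul_norm_sq_and_integral_le hQ.2.1
    (fun x => sq_nonneg ‖Q x‖) hQ.integral_le hl hl1
  obtain ⟨iτ, hτu⟩ := hu.integrable_mul_norm_sq_and_integral_le (fun x => (hτ.1 x).norm)
    (fun x => norm_nonneg (τ x)) hτ.integral_le hl hl1
  have hQterm : (∫ x, Q x * ((starRingEnd ℂ) (u' x) * u x + (starRingEnd ℂ) (u x) * u' x)).re ≤
      d * (∫ x, ‖u' x‖ ^ 2) + d⁻¹ * ∫ x, ‖Q x‖ ^ 2 * ‖u x‖ ^ 2 :=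
    (Complex.re_le_norm _).trans
      (norm_integral_mul_conj_add_le hd hu.integrable_norm_deriv_sq iQ)
  have hτterm : -(∫ x, ‖τ x‖ * ‖u x‖ ^ 2) ≤ (∫ x, τ x * (‖u x‖ : ℂ) ^ 2).re :=
    neg_le_of_abs_le <| (Complex.abs_re_le_norm _).trans <|
      norm_integral_le_of_norm_le iτ (ae_of_all _ fun x => by simp)
  have hQweight := mul_le_mul_of_nonneg_left hQu (inv_nonneg.2 hd.le)
  rw [tform, Complex.add_re, Complex.sub_re, Complex.ofReal_re]
  linarith

end InH1

theorem neg_four_mul_mul_le_of_lt_half {a b K A B : ℝ} (ha : 0 ≤ a) (hb : 0 ≤ b)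
    (hab : a + b ≤ K / 2) (hK : K < 1 / 2) (hA : 0 ≤ A) (hB : 0 ≤ B) :
    -4 * K * B ≤ 3 / 4 * A - (4 * a ^ 2 + b) * (2 * B + 2 * A) := by
  have hcoeff : 4 * a ^ 2 + b ≤ K / 2 := by nlinarith
  have hweight : (4 * a ^ 2 + b) * (2 * B + 2 * A) ≤ K / 2 * (2 * B + 2 * A) := by gcongr
  have habsorb : K * A ≤ 1 / 2 * A := by gcongr
  have hKB : 0 ≤ K * B := mul_nonneg (by linarith) hB
  linarith

theorem neg_thirtyTwo_mul_pow_four_mul_le_of_half_le {a b K A B : ℝ} (ha : 0 ≤ a)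
    (haK : a ≤ K / 2) (hbK : b ≤ K / 2) (hK : 1 / 2 ≤ K) (hA : 0 ≤ A) (hB : 0 ≤ B) :
    -32 * K ^ 4 * B ≤
      1 / 2 * A - (2 * a ^ 2 + b) * (12 * K ^ 2 * B + 1 / (3 * K ^ 2) * A) := by
  have hcoeff : 2 * a ^ 2 + b ≤ 3 / 2 * K ^ 2 := by nlinarith
  have hweight : (2 * a ^ 2 + b) * (12 * K ^ 2 * B + 1 / (3 * K ^ 2) * A) ≤
      18 * K ^ 4 * B + 1 / 2 * A := by
    calc (2 * a ^ 2 + b) * (12 * K ^ 2 * B + 1 / (3 * K ^ 2) * A)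
        ≤ 3 / 2 * K ^ 2 * (12 * K ^ 2 * B + 1 / (3 * K ^ 2) * A) := by gcongr
      _ = 18 * K ^ 4 * B + 1 / 2 * A := by field_simp; ring
  have hKB : 0 ≤ K ^ 4 * B := by positivity
  linarith

theorem tform_lower_bound_real_general (Q τ u u' : ℝ → ℂ)
    (hQ : InStepL2 Q) (hτ : InStepL1 τ) (hu : InH1 u u') :
    (if Kc Q τ < 1 / 2 then -4 * Kc Q τ else -32 * Kc Q τ ^ 4) * (∫ x : ℝ, ‖u x‖ ^ 2)
      ≤ (tform Q τ u u').re := by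
  have hA : 0 ≤ ∫ x, ‖u' x‖ ^ 2 := integral_nonneg fun x => sq_nonneg ‖u' x‖
  have hB : 0 ≤ ∫ x, ‖u x‖ ^ 2 := integral_nonneg fun x => sq_nonneg ‖u x‖
  have ha := stepL2_nonneg Q
  have hb := stepL1_nonneg τ
  have hsum : stepL2 Q + stepL1 τ = Kc Q τ / 2 := by rw [Kc]; ring
  set K := Kc Q τ
  split_ifs with hK
  · refine (neg_four_mul_mul_le_of_lt_half ha hb hsum.le hK hA hB).trans ?_
    refine Eq.trans_le ?_ (hu.le_re_tform hQ hτ (l := 1) (d := 1 / 4) one_pos le_rfl (by norm_num))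
    ring
  · have hK : 1 / 2 ≤ K := not_lt.1 hK
    have hl1 : 1 / (6 * K ^ 2) ≤ 1 := by rw [div_le_one] <;> nlinarith
    have haK : stepL2 Q ≤ K / 2 := by linarith
    have hbK : stepL1 τ ≤ K / 2 := by linarith
    refine (neg_thirtyTwo_mul_pow_four_mul_le_of_half_le ha haK hbK hK hA hB).trans ?_
    refine Eq.trans_le ?_ (hu.le_re_tform hQ hτ (l := 1 / (6 * K ^ 2)) (d := 1 / 2)
      (by positivity) hl1 (by norm_num))
    field_simp
    ring

/-- Lower bound for real potentials: if `Q` and `τ` are real-valued then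
`t[u] ≥ m(K)‖u‖²` where `m(K) = -4K` for `0 ≤ K < 1/2` and `m(K) = -32K⁴` for `K ≥ 1/2`;
i.e. the self-adjoint operator `S(q)`, `q = Q' + τ`, is bounded below by `m(K)`. -/
theorem tform_lower_bound_real (Q τ u u' : ℝ → ℂ)
    (hQ : InStepL2 Q) (hτ : InStepL1 τ)
    (hQreal : ∀ x, (Q x).im = 0) (hτreal : ∀ x, (τ x).im = 0)
    (hu : InH1 u u') :
    (if Kc Q τ < 1 / 2 then -4 * Kc Q τ else -32 * Kc Q τ ^ 4) * (∫ x : ℝ, ‖u x‖ ^ 2)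
      ≤ (tform Q τ u u').re :=
  tform_lower_bound_real_general Q τ u u' hQ hτ hu
end

section
/- Let Q ∈ L²_loc(ℝ,ℂ), τ ∈ L¹_loc(ℝ,ℂ). Let u, w, v, z : ℝ → ℂ be locally absolutely continuous functions such that a.e. u' = w + Qu and v' = z + conj(Q)·v, and define a.e. l[u] := −w' − Q·u' + τ·u and l⁺[v] := −( z' + conj(Q)·z + (conj(Q)² − conj(τ))·v ). Suppose u, v, l[u], l⁺[v] all belong to L²(ℝ). Then both limits lim_{t→−∞} [u,v](t) and lim_{t→+∞} [u,v](t) exist and are finite, where [u,v](t) := u(t)·conj(z(t)) − w(t)·conj(v(t)). -/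
/-!
The derivative of the bracket is given almost everywhere by Lagrange's identity
`[u,v]' = l[u] conj(v) - u conj(l⁺[v])`: the terms `Q² u conj(v)` and `τ u conj(v)` of the two
products on the right cancel. The bracket is locally absolutely continuous, hence an indefinite
integral of this derivative; by Hölder's inequality the derivative is integrable over `ℝ`, so the
bracket converges at both ends.
-/

open MeasureTheory Filter Topology

/-- The Shin–Zettl quasi-differential expression `l[u] = -(u^{[1]})' - Q u' + τ u`,
written in terms of the quasi-derivative `w = u^{[1]} = u' - Qu` (so that `u' = w + Qu`)
and the a.e. derivative `dw` of `w`. -/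
noncomputable def qdL (Q τ u w dw : ℝ → ℂ) (x : ℝ) : ℂ :=
  -dw x - Q x * (w x + Q x * u x) + τ x * u x

/-- The formally adjoint quasi-differential expression
`l⁺[v] = -( (v^{{1}})' + conj(Q) v^{{1}} + (conj(Q)² - conj(τ)) v )`, written in terms of
the adjoint quasi-derivative `z = v^{{1}} = v' - conj(Q)v` and the a.e. derivative `dz`
of `z`. -/
noncomputable def qdLplus (Q τ v z dz : ℝ → ℂ) (x : ℝ) : ℂ :=
  -(dz x + (starRingEnd ℂ) (Q x) * z x
      + (((starRingEnd ℂ) (Q x)) ^ 2 - (starRingEnd ℂ) (τ x)) * v x)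

/-- The bracket `[u,v](t) = u(t) conj(v^{{1}}(t)) - u^{[1]}(t) conj(v(t))`. -/
noncomputable def qdBracket (u w v z : ℝ → ℂ) (t : ℝ) : ℂ :=
  u t * (starRingEnd ℂ) (z t) - w t * (starRingEnd ℂ) (v t)

section IndefiniteIntegral

variable {E F : Type*} [NormedAddCommGroup E] [NormedSpace ℝ E]
  [NormedAddCommGroup F] [NormedSpace ℝ F]

/-- `f` is an indefinite integral of the locally integrable function `f'`; for complete `E` this
means that `f` is locally absolutely continuous on `ℝ` with derivative `f'` almost everywhere. The
base point `0` is immaterial, see `IsIndefiniteIntegral.integral_eq_sub`. -/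
structure IsIndefiniteIntegral (f f' : ℝ → E) : Prop where
  locallyIntegrable : LocallyIntegrable f' volume
  eq_add_integral : ∀ x : ℝ, f x = f 0 + ∫ s in (0 : ℝ)..x, f' s

theorem absolutelyContinuousOnInterval_of_dist_le {X Y : Type*} [PseudoMetricSpace X]
    [PseudoMetricSpace Y] {f : ℝ → X} {g : ℝ → Y} {a b : ℝ}
    (hfg : ∀ x y, dist (f x) (f y) ≤ dist (g x) (g y))
    (hg : AbsolutelyContinuousOnInterval g a b) : AbsolutelyContinuousOnInterval f a b :=
  squeeze_zero (fun _ => Finset.sum_nonneg fun _ _ => dist_nonneg)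
    (fun _ => Finset.sum_le_sum fun _ _ => hfg _ _) hg

namespace IsIndefiniteIntegral

variable {f f' g g' : ℝ → E}

theorem intervalIntegrable (hf : IsIndefiniteIntegral f f') (a b : ℝ) :
    IntervalIntegrable f' volume a b :=
  (hf.locallyIntegrable.integrableOn_isCompact isCompact_uIcc).intervalIntegrable

theorem integral_eq_sub (hf : IsIndefiniteIntegral f f') (a b : ℝ) :
    ∫ s in a..b, f' s = f b - f a := by
  rw [hf.eq_add_integral a, hf.eq_add_integral b, add_sub_add_left_eq_sub,
    intervalIntegral.integral_interval_sub_left (hf.intervalIntegrable 0 b)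
      (hf.intervalIntegrable 0 a)]

theorem absolutelyContinuousOnInterval (hf : IsIndefiniteIntegral f f') (a b : ℝ) :
    AbsolutelyContinuousOnInterval f a b := by
  have hnorm : AbsolutelyContinuousOnInterval (fun x => ∫ s in a..x, ‖f' s‖) a b :=
    (hf.intervalIntegrable a b).norm.absolutelyContinuousOnInterval_intervalIntegral
      Set.left_mem_uIcc
  refine absolutelyContinuousOnInterval_of_dist_le (fun x y => ?_) hnorm
  rw [dist_eq_norm, dist_eq_norm, ← hf.integral_eq_sub,
    intervalIntegral.integral_interval_sub_left (hf.intervalIntegrable a x).norm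
      (hf.intervalIntegrable a y).norm, Real.norm_eq_abs]
  exact intervalIntegral.norm_integral_le_abs_integral_norm

theorem continuous (hf : IsIndefiniteIntegral f f') : Continuous f := by
  rw [funext hf.eq_add_integral]
  exact continuous_const.add <| intervalIntegral.continuous_primitive hf.intervalIntegrable 0

theorem sub (hf : IsIndefiniteIntegral f f') (hg : IsIndefiniteIntegral g g') :
    IsIndefiniteIntegral (fun x => f x - g x) (fun x => f' x - g' x) where
  locallyIntegrable := hf.locallyIntegrable.sub hg.locallyIntegrable
  eq_add_integral x := by
    rw [intervalIntegral.integral_sub (hf.intervalIntegrable 0 x) (hg.intervalIntegrable 0 x),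
      hf.integral_eq_sub, hg.integral_eq_sub]
    abel

theorem tendsto_atTop (hf : IsIndefiniteIntegral f f') {a : ℝ}
    (hf' : IntegrableOn f' (Set.Ioi a) volume) :
    Tendsto f atTop (𝓝 (f a + ∫ s in Set.Ioi a, f' s)) := by
  have h := (intervalIntegral_tendsto_integral_Ioi a hf' tendsto_id).const_add (f a)
  simpa only [id, hf.integral_eq_sub, add_sub_cancel] using h

theorem tendsto_atBot (hf : IsIndefiniteIntegral f f') {a : ℝ}
    (hf' : IntegrableOn f' (Set.Iic a) volume) :
    Tendsto f atBot (𝓝 (f a - ∫ s in Set.Iic a, f' s)) := by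
  have h := (intervalIntegral_tendsto_integral_Iic a hf' tendsto_id).const_sub (f a)
  simpa only [id, hf.integral_eq_sub, sub_sub_cancel] using h

variable [CompleteSpace E]

theorem ae_hasDerivAt (hf : IsIndefiniteIntegral f f') : ∀ᵐ x, HasDerivAt f (f' x) x := by
  rw [funext hf.eq_add_integral]
  filter_upwards [_root_.LocallyIntegrable.ae_hasDerivAt_integral hf.locallyIntegrable] with x hx
  exact (hx 0).const_add (f 0)

theorem of_ae_hasDerivAt (hf : ∀ a b, AbsolutelyContinuousOnInterval f a b)
    (hf' : LocallyIntegrable f' volume) (hderiv : ∀ᵐ x, HasDerivAt f (f' x) x) :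
    IsIndefiniteIntegral f f' where
  locallyIntegrable := hf'
  eq_add_integral x := by
    have hF : IsIndefiniteIntegral (fun t => ∫ s in (0 : ℝ)..t, f' s) f' := ⟨hf', by simp⟩
    have hderiv_zero : ∀ᵐ t, HasDerivAt (fun t => f t - ∫ s in (0 : ℝ)..t, f' s) 0 t := by
      filter_upwards [hderiv, hF.ae_hasDerivAt] with t hft hFt
      simpa only [sub_self] using hft.fun_sub hFt
    obtain ⟨C, hC⟩ := ((hf 0 x).fun_sub
      (hF.absolutelyContinuousOnInterval 0 x)).const_of_ae_hasDerivAt_zero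
        (hderiv_zero.mono fun _ ht _ => ht)
    have hC0 : f 0 = C := by simpa using hC 0 Set.left_mem_uIcc
    rw [hC0, ← hC x Set.right_mem_uIcc, sub_add_cancel]

theorem clm_comp [CompleteSpace F] (L : E →L[ℝ] F) (hf : IsIndefiniteIntegral f f') :
    IsIndefiniteIntegral (fun x => L (f x)) (fun x => L (f' x)) where
  locallyIntegrable x := (hf.locallyIntegrable x).imp fun _ hs => ⟨hs.1, L.integrable_comp hs.2⟩
  eq_add_integral x := by
    rw [L.intervalIntegral_comp_comm (hf.intervalIntegrable 0 x), ← map_add, ← hf.eq_add_integral]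

theorem mul {A : Type*} [NormedRing A] [NormMulClass A] [NormedAlgebra ℝ A] [CompleteSpace A]
    {f f' g g' : ℝ → A} (hf : IsIndefiniteIntegral f f') (hg : IsIndefiniteIntegral g g') :
    IsIndefiniteIntegral (fun x => f x * g x) (fun x => f' x * g x + f x * g' x) := by
  have hint : LocallyIntegrable (fun x => f' x * g x + f x * g' x) volume := by
    rw [← locallyIntegrableOn_univ]
    exact ((hf.locallyIntegrable.locallyIntegrableOn _).mul_continuousOn
      hg.continuous.continuousOn isClosed_univ.isLocallyClosed).add
        ((hg.locallyIntegrable.locallyIntegrableOn _).continuousOn_mul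
          hf.continuous.continuousOn isClosed_univ.isLocallyClosed)
  refine of_ae_hasDerivAt (fun a b => (hf.absolutelyContinuousOnInterval a b).fun_smul
    (hg.absolutelyContinuousOnInterval a b)) hint ?_
  filter_upwards [hf.ae_hasDerivAt, hg.ae_hasDerivAt] with x hfx hgx
  exact hfx.mul hgx

end IsIndefiniteIntegral

end IndefiniteIntegral

section Bracket

open scoped ComplexConjugate

variable {Q τ u w v z dw dz : ℝ → ℂ}

theorem qdL_mul_conj_sub_mul_conj_qdLplus (Q τ u w v z dw dz : ℝ → ℂ) (x : ℝ) :
    qdL Q τ u w dw x * conj (v x) - u x * conj (qdLplus Q τ v z dz x) =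
      ((w x + Q x * u x) * conj (z x) + u x * conj (dz x)) -
        (dw x * conj (v x) + w x * conj (z x + conj (Q x) * v x)) := by
  simp only [qdL, qdLplus, map_add, map_mul, map_neg, map_sub, map_pow, Complex.conj_conj]
  ring

theorem isIndefiniteIntegral_qdBracket
    (hu : IsIndefiniteIntegral u (fun s => w s + Q s * u s))
    (hv : IsIndefiniteIntegral v (fun s => z s + conj (Q s) * v s))
    (hw : IsIndefiniteIntegral w dw) (hz : IsIndefiniteIntegral z dz) :
    IsIndefiniteIntegral (qdBracket u w v z)
      (fun x => qdL Q τ u w dw x * conj (v x) - u x * conj (qdLplus Q τ v z dz x)) := by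
  simp only [qdL_mul_conj_sub_mul_conj_qdLplus]
  exact (hu.mul (hz.clm_comp Complex.conjCLE.toContinuousLinearMap)).sub
    (hw.mul (hv.clm_comp Complex.conjCLE.toContinuousLinearMap))

theorem bracket_limits_exist_general
    (hu : IsIndefiniteIntegral u (fun s => w s + Q s * u s))
    (hv : IsIndefiniteIntegral v (fun s => z s + conj (Q s) * v s))
    (hw : IsIndefiniteIntegral w dw) (hz : IsIndefiniteIntegral z dz)
    (hint : Integrable
      (fun x => qdL Q τ u w dw x * conj (v x) - u x * conj (qdLplus Q τ v z dz x)) volume) :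
    (∃ L : ℂ, Tendsto (qdBracket u w v z) atBot (𝓝 L)) ∧
      (∃ L : ℂ, Tendsto (qdBracket u w v z) atTop (𝓝 L)) :=
  have hbracket := isIndefiniteIntegral_qdBracket hu hv hw hz
  ⟨⟨_, hbracket.tendsto_atBot (a := 0) hint.integrableOn⟩,
    ⟨_, hbracket.tendsto_atTop (a := 0) hint.integrableOn⟩⟩

end Bracket

/-- If `u, v, l[u], l⁺[v]` are all square integrable, then the bracket `[u,v](t)` has
finite limits as `t → -∞` and `t → +∞`. -/
theorem bracket_limits_exist (Q τ u w v z dw dz : ℝ → ℂ)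
    (hQmeas : AEStronglyMeasurable Q volume)
    (hQ : LocallyIntegrable (fun s => ‖Q s‖ ^ 2) volume)
    (hτ : LocallyIntegrable τ volume)
    (hu' : LocallyIntegrable (fun s => w s + Q s * u s) volume)
    (hu : ∀ x : ℝ, u x = u 0 + ∫ s in (0:ℝ)..x, (w s + Q s * u s))
    (hv' : LocallyIntegrable (fun s => z s + (starRingEnd ℂ) (Q s) * v s) volume)
    (hv : ∀ x : ℝ, v x = v 0 + ∫ s in (0:ℝ)..x, (z s + (starRingEnd ℂ) (Q s) * v s))
    (hdw : LocallyIntegrable dw volume)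
    (hw : ∀ x : ℝ, w x = w 0 + ∫ s in (0:ℝ)..x, dw s)
    (hdz : LocallyIntegrable dz volume)
    (hz : ∀ x : ℝ, z x = z 0 + ∫ s in (0:ℝ)..x, dz s)
    (huL2 : MemLp u 2 volume) (hvL2 : MemLp v 2 volume)
    (hluL2 : MemLp (qdL Q τ u w dw) 2 volume)
    (hlvL2 : MemLp (qdLplus Q τ v z dz) 2 volume) :
    (∃ L : ℂ, Tendsto (qdBracket u w v z) atBot (𝓝 L)) ∧
      (∃ L : ℂ, Tendsto (qdBracket u w v z) atTop (𝓝 L)) :=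
  bracket_limits_exist_general ⟨hu', hu⟩ ⟨hv', hv⟩ ⟨hdw, hw⟩ ⟨hdz, hz⟩
    ((hluL2.integrable_mul hvL2.star).sub (huL2.integrable_mul hlvL2.star))
end

section
/- Let v ∈ L²(ℝ,ℂ) be locally square-integrable and suppose that for every real-valued smooth compactly supported function φ : ℝ → ℝ one has ∫_ℝ (φ'(x))² |v(x)|² dx ≥ ∫_ℝ φ(x)² |v(x)|² dx. Then v = 0 almost everywhere. -/
open MeasureTheory

/-!
Dilate one bump function: `φₐ(x) = f (a x)` with `f 0 = 1`. As `a → 0`, dominated convergence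
gives `∫ φₐ² |v|² → ∫ |v|²`, while `∫ (φₐ')² |v|² = a² ∫ f'(a x)² |v|² → 0` because `f'` is bounded.
The assumed inequality passes to the limit and gives `∫ |v|² ≤ 0`.
-/

open Filter Topology
open scoped ContDiff

section

variable {E : Type*} [NormedAddCommGroup E] [NormedSpace ℝ E] [MeasurableSpace E]
  [OpensMeasurableSpace E] {μ : Measure E} {w : E → ℝ}

theorem tendsto_integral_comp_smul_mul {g : E → ℝ} (hg : Continuous g) {C : ℝ}
    (hC : ∀ x, ‖g x‖ ≤ C) (hw : Integrable w μ) :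
    Tendsto (fun a : ℝ => ∫ x, g (a • x) * w x ∂μ) (𝓝 0) (𝓝 (g 0 * ∫ x, w x ∂μ)) := by
  rw [← integral_const_mul]
  refine tendsto_integral_filter_of_dominated_convergence (fun x => C * ‖w x‖)
    (.of_forall fun a => ?_) (.of_forall fun a => .of_forall fun x => ?_)
    (hw.norm.const_mul C) (.of_forall fun x => ?_)
  · have hga : Continuous fun x : E => g (a • x) := by fun_prop
    exact hga.aestronglyMeasurable.mul hw.aestronglyMeasurable
  · exact norm_mul_le_of_le (hC _) le_rfl
  · have hga : Continuous fun a : ℝ => g (a • x) * w x := by fun_prop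
    exact hga.tendsto' 0 _ (by rw [zero_smul])

theorem tendsto_integral_norm_fderiv_comp_smul_rpow_mul {G : Type*} [NormedAddCommGroup G]
    [NormedSpace ℝ G] {f : E → G} (hf : ContDiff ℝ 1 f) {C : ℝ} (hC : ∀ x, ‖fderiv ℝ f x‖ ≤ C)
    {p : ℝ} (hp : 0 < p) (hw : Integrable w μ) :
    Tendsto (fun a : ℝ => ∫ x, ‖fderiv ℝ (fun y => f (a • y)) x‖ ^ p * w x ∂μ) (𝓝 0) (𝓝 0) := by
  have scaling (a : ℝ) : ∫ x, ‖fderiv ℝ (fun y => f (a • y)) x‖ ^ p * w x ∂μ =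
      |a| ^ p * ∫ x, ‖fderiv ℝ f (a • x)‖ ^ p * w x ∂μ := by
    simp only [fderiv_comp_smul, norm_smul, Real.norm_eq_abs,
      Real.mul_rpow (abs_nonneg a) (norm_nonneg _), mul_assoc, integral_const_mul]
  have factor_tendsto : Tendsto (fun a : ℝ => |a| ^ p) (𝓝 0) (𝓝 0) :=
    (continuous_abs.rpow_const fun _ => .inr hp.le).tendsto' 0 0
      (by rw [abs_zero, Real.zero_rpow hp.ne'])
  have integral_tendsto := tendsto_integral_comp_smul_mul (μ := μ)
    (g := fun x => ‖fderiv ℝ f x‖ ^ p) (C := C ^ p)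
    ((hf.continuous_fderiv one_ne_zero).norm.rpow_const fun _ => .inr hp.le)
    (fun x => by
      rw [Real.norm_of_nonneg (by positivity)]
      exact Real.rpow_le_rpow (norm_nonneg _) (hC x) hp.le) hw
  simpa only [scaling, zero_mul] using factor_tendsto.mul integral_tendsto

theorem integral_nonpos_of_poincare [FiniteDimensional ℝ E] {p K : ℝ} (hp : 0 < p)
    (hw : Integrable w μ)
    (h : ∀ φ : E → ℝ, ContDiff ℝ ∞ φ → HasCompactSupport φ →
      ∫ x, ‖φ x‖ ^ p * w x ∂μ ≤ K * ∫ x, ‖fderiv ℝ φ x‖ ^ p * w x ∂μ) :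
    ∫ x, w x ∂μ ≤ 0 := by
  let f : ContDiffBump (0 : E) := default
  have hf : ContDiff ℝ ∞ f := f.contDiff
  have f_zero : f 0 = 1 := f.one_of_mem_closedBall (Metric.mem_closedBall_self f.rIn_pos.le)
  obtain ⟨C, hC⟩ := (f.hasCompactSupport.fderiv (𝕜 := ℝ)).exists_bound_of_continuous
    (hf.continuous_fderiv (by simp))
  have lhs_tendsto : Tendsto (fun a : ℝ => ∫ x, ‖f (a • x)‖ ^ p * w x ∂μ) (𝓝 0)
      (𝓝 (∫ x, w x ∂μ)) := by
    simpa [f_zero] using tendsto_integral_comp_smul_mul (g := fun x => ‖f x‖ ^ p) (C := 1)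
      (f.continuous.norm.rpow_const fun _ => .inr hp.le)
      (fun x => by
        rw [Real.norm_of_nonneg (by positivity), Real.norm_of_nonneg f.nonneg]
        exact Real.rpow_le_one f.nonneg f.le_one hp.le) hw
  have rhs_tendsto := (tendsto_integral_norm_fderiv_comp_smul_rpow_mul (μ := μ)
    (hf.of_le (by simp)) hC hp hw).const_mul K
  rw [mul_zero] at rhs_tendsto
  refine le_of_tendsto_of_tendsto (b := 𝓝[≠] (0 : ℝ))
    (lhs_tendsto.mono_left nhdsWithin_le_nhds) (rhs_tendsto.mono_left nhdsWithin_le_nhds) ?_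
  filter_upwards [self_mem_nhdsWithin (s := {(0 : ℝ)}ᶜ)] with a ha
  exact h (fun x => f (a • x)) (hf.comp (contDiff_const_smul a)) (f.hasCompactSupport.comp_smul ha)

theorem vanishing_lemma_general [FiniteDimensional ℝ E] {G : Type*} [NormedAddCommGroup G]
    {p : ENNReal} (hp₀ : p ≠ 0) (hp : p ≠ ⊤) {v : E → G} (hv : MemLp v p μ) {K : ℝ}
    (h : ∀ φ : E → ℝ, ContDiff ℝ ∞ φ → HasCompactSupport φ →
      ∫ x, ‖φ x‖ ^ p.toReal * ‖v x‖ ^ p.toReal ∂μ ≤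
        K * ∫ x, ‖fderiv ℝ φ x‖ ^ p.toReal * ‖v x‖ ^ p.toReal ∂μ) :
    v =ᵐ[μ] 0 := by
  have p_pos : 0 < p.toReal := ENNReal.toReal_pos hp₀ hp
  have integrable_norm_rpow : Integrable (fun x => ‖v x‖ ^ p.toReal) μ :=
    hv.integrable_norm_rpow hp₀ hp
  have norm_rpow_nonneg : 0 ≤ fun x => ‖v x‖ ^ p.toReal := fun x => by positivity
  have integral_eq_zero : ∫ x, ‖v x‖ ^ p.toReal ∂μ = 0 :=
    (integral_nonpos_of_poincare p_pos integrable_norm_rpow h).antisymm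
      (integral_nonneg norm_rpow_nonneg)
  have norm_rpow_ae_eq_zero : (fun x => ‖v x‖ ^ p.toReal) =ᵐ[μ] 0 :=
    (integral_eq_zero_iff_of_nonneg norm_rpow_nonneg integrable_norm_rpow).1 integral_eq_zero
  filter_upwards [norm_rpow_ae_eq_zero] with x hx
  exact norm_eq_zero.1 ((Real.rpow_eq_zero (norm_nonneg _) p_pos.ne').1 hx)

end

/-- Vanishing lemma: if `v ∈ L²(ℝ)` satisfies `∫ (φ')²|v|² ≥ ∫ φ²|v|²` for every real-valued
smooth compactly supported `φ`, then `v = 0` almost everywhere. -/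
theorem vanishing_lemma (v : ℝ → ℂ) (hv : MemLp v 2 volume)
    (h : ∀ φ : ℝ → ℝ, ContDiff ℝ (⊤ : ℕ∞) φ → HasCompactSupport φ →
      (∫ x : ℝ, φ x ^ 2 * ‖v x‖ ^ 2) ≤ ∫ x : ℝ, deriv φ x ^ 2 * ‖v x‖ ^ 2) :
    v =ᵐ[volume] 0 :=
  vanishing_lemma_general two_ne_zero ENNReal.ofNat_ne_top hv (K := 1) fun φ hφ hφc => by
    simpa [← norm_deriv_eq_norm_fderiv] using h φ hφ hφc
end
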